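/- arXiv:1506.03741 — 4 statements merged into one kernel-verified Lean document; each statement's English description precedes it below -/
import Mathlib

section
/- For every η > 0, the Fourier transform of the function K_η(x) = (sin(2πx) + sin(2π(1+η)x)) / (2πx(1 − 4η²x²)) satisfies: K̂_η(t) = 1 if |t| ≤ 1; K̂_η(t) = cos²(π(|t|−1)/(2η)) if 1 ≤ |t| ≤ 1+η; and K̂_η(t) = 0 if |t| ≥ 1+η, where K̂_η(t) = ∫_{−∞}^{∞} K_η(x) e^{−2πitx} dx. -/
open Real MeasureTheory Complex

/-!
The right-hand side is a continuous even window `w` supported in `[-(1 + η), 1 + η]`. Its Fourier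
transform at `x` is twice the integral of `w t * cos (a t)` over `t ≥ 0`, where `a = 2πx`. The
plateau contributes `sin a / a` to this integral, and since `cos² = (1 + cos) / 2` on the edge, the
rest reduces to integrating half a period of `cos (π (t - 1) / η)` against `cos (a t)`. The outcome
is `K_η` away from the singularities, hence everywhere by continuity. As `K_η` decays like `|x|⁻³`,
Fourier inversion applies, and for the even function `w` it reads `𝓕 (𝓕 w) = w`.
-/

open scoped FourierTransform

theorem integral_eq_zero_of_odd {E : Type*} [NormedAddCommGroup E] [NormedSpace ℝ E] {f : ℝ → E}
    (hf : f.Odd) : ∫ t, f t = 0 := by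
  have : IsAddTorsionFree E := .of_isTorsionFree ℝ E
  have h_neg : ∫ t, f t = -∫ t, f t := by
    rw [← integral_neg, ← integral_neg_eq_self f volume]
    simp only [hf.eq]
  exact self_eq_neg.mp h_neg

theorem integral_eq_two_mul_intervalIntegral_of_even {f : ℝ → ℝ} {c : ℝ} (hf : f.Even)
    (hc : 0 ≤ c) (hf_zero : ∀ t, c ≤ t → f t = 0) : ∫ t, f t = 2 * ∫ t in 0..c, f t := by
  have h_abs (t : ℝ) : f |t| = f t := by
    rcases abs_choice t with h | h <;> simp only [h, hf.eq]
  have h_Ioc : ∫ t in Set.Ioi 0, f t = ∫ t in Set.Ioc 0 c, f t :=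
    setIntegral_eq_of_subset_of_forall_sdiff_eq_zero measurableSet_Ioi Set.Ioc_subset_Ioi_self
      fun t ht ↦ hf_zero t (not_le.mp fun htc ↦ ht.2 ⟨ht.1, htc⟩).le
  calc ∫ t, f t = ∫ t, f |t| := by simp only [h_abs]
    _ = 2 * ∫ t in 0..c, f t := by
      rw [integral_comp_abs, h_Ioc, intervalIntegral.integral_of_le hc]

theorem fourier_ofReal_of_even {f : ℝ → ℝ} (hf : Integrable f) (hf_even : f.Even) (x : ℝ) :
    𝓕 (fun t ↦ (f t : ℂ)) x = ((∫ t, f t * Real.cos (2 * π * x * t) : ℝ) : ℂ) := by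
  have h_cos : Integrable fun t ↦ ((f t * Real.cos (2 * π * x * t) : ℝ) : ℂ) :=
    (hf.mul_bdd (c := 1) (by fun_prop) (ae_of_all _ fun t ↦ Real.abs_cos_le_one _)).ofReal
  have h_sin : Integrable fun t ↦ ((f t * Real.sin (2 * π * x * t) : ℝ) : ℂ) :=
    (hf.mul_bdd (c := 1) (by fun_prop) (ae_of_all _ fun t ↦ Real.abs_sin_le_one _)).ofReal
  have h_sin_zero : ∫ t, f t * Real.sin (2 * π * x * t) = 0 :=
    integral_eq_zero_of_odd fun t ↦ by rw [hf_even.eq, mul_neg, Real.sin_neg, mul_neg]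
  have h_euler (t : ℝ) : Complex.exp (↑(-2 * π * t * x) * I) • (f t : ℂ) =
      ((f t * Real.cos (2 * π * x * t) : ℝ) : ℂ) -
        ((f t * Real.sin (2 * π * x * t) : ℝ) : ℂ) * I := by
    rw [show -2 * π * t * x = -(2 * π * x * t) by ring, Complex.exp_mul_I, ← Complex.ofReal_cos,
      ← Complex.ofReal_sin, Real.cos_neg, Real.sin_neg, smul_eq_mul]
    push_cast
    ring
  simp only [Real.fourier_real_eq_integral_exp_smul, h_euler]
  rw [integral_sub h_cos (h_sin.mul_const I), integral_mul_const,
    integral_complex_ofReal, integral_complex_ofReal, h_sin_zero, ofReal_zero, zero_mul, sub_zero]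

theorem continuous_fourier {V E : Type*} [NormedAddCommGroup V] [InnerProductSpace ℝ V]
    [MeasurableSpace V] [BorelSpace V] [FiniteDimensional ℝ V] [NormedAddCommGroup E]
    [NormedSpace ℂ E] {f : V → E} (hf : Integrable f) : Continuous (𝓕 f) :=
  VectorFourier.fourierIntegral_continuous Real.continuous_fourierChar (innerSL ℝ).continuous₂ hf

theorem fourier_fourier_of_even {V E : Type*} [NormedAddCommGroup V] [InnerProductSpace ℝ V]
    [MeasurableSpace V] [BorelSpace V] [FiniteDimensional ℝ V] [NormedAddCommGroup E]
    [NormedSpace ℂ E] [CompleteSpace E] {f : V → E} (hf_cont : Continuous f) (hf : Integrable f)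
    (hf_fourier : Integrable (𝓕 f)) (hf_even : f.Even) : 𝓕 (𝓕 f) = f := by
  have h_inv : 𝓕⁻ f = 𝓕 f := by
    simp only [Real.fourierInv_eq_fourier_comp_neg, hf_even.eq]
  rw [← h_inv, hf_cont.fourier_fourierInv_eq hf hf_fourier]

theorem integral_cos_mul_add {k : ℝ} (hk : k ≠ 0) (d u v : ℝ) :
    ∫ t in u..v, Real.cos (k * t + d) =
      (Real.sin (k * v + d) - Real.sin (k * u + d)) / k := by
  rw [intervalIntegral.integral_comp_mul_add _ hk, integral_cos, smul_eq_mul, inv_mul_eq_div]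

theorem integral_cos_mul {a : ℝ} (ha : a ≠ 0) (u v : ℝ) :
    ∫ t in u..v, Real.cos (a * t) = (Real.sin (a * v) - Real.sin (a * u)) / a := by
  simpa only [add_zero] using integral_cos_mul_add ha 0 u v

theorem integral_half_period_cos_mul_cos {η a : ℝ} (hη : η ≠ 0) (ha : a ^ 2 ≠ (π / η) ^ 2)
    (u : ℝ) :
    ∫ t in u..u + η, Real.cos (π / η * (t - u)) * Real.cos (a * t) =
      a * (Real.sin (a * u) + Real.sin (a * (u + η))) / ((π / η) ^ 2 - a ^ 2) := by
  set b := π / η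
  have hbη : b * η = π := div_mul_cancel₀ π hη
  have h_sub : a - b ≠ 0 := fun h ↦ ha (by rw [sub_eq_zero.mp h])
  have h_add : a + b ≠ 0 := fun h ↦ ha (by rw [eq_neg_of_add_eq_zero_left h, neg_sq])
  have h_sq : b ^ 2 - a ^ 2 ≠ 0 := sub_ne_zero.mpr ha.symm
  have h_prod (t : ℝ) : Real.cos (b * (t - u)) * Real.cos (a * t) =
      (Real.cos ((a - b) * t + b * u) + Real.cos ((a + b) * t + -(b * u))) / 2 := by
    rw [show (a - b) * t + b * u = a * t - b * (t - u) by ring,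
      show (a + b) * t + -(b * u) = a * t + b * (t - u) by ring, Real.cos_sub, Real.cos_add]
    ring
  simp only [h_prod]
  rw [intervalIntegral.integral_div, intervalIntegral.integral_add
    (Continuous.intervalIntegrable (by fun_prop) _ _)
    (Continuous.intervalIntegrable (by fun_prop) _ _),
    integral_cos_mul_add h_sub, integral_cos_mul_add h_add,
    show (a - b) * (u + η) + b * u = a * (u + η) - π by rw [← hbη]; ring,
    show (a + b) * (u + η) + -(b * u) = a * (u + η) + π by rw [← hbη]; ring,
    show (a - b) * u + b * u = a * u by ring, show (a + b) * u + -(b * u) = a * u by ring,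
    Real.sin_sub_pi, Real.sin_add_pi]
  field_simp
  ring

/-- The raised-cosine window: `1` on `[-1, 1]`, falling to `0` along `cos²` on `1 ≤ |t| ≤ 1 + η`.
Clamping `|t| - 1` to `[0, η]` encodes the three cases in one visibly continuous formula. -/
noncomputable def raisedCosine (η t : ℝ) : ℝ :=
  Real.cos (π * max 0 (min η (|t| - 1)) / (2 * η)) ^ 2

/-- The kernel `K_η` by its explicit formula, with the junk value `0` at its three removable
singularities `0` and `±1 / (2 * η)`. -/
noncomputable def raisedCosineKernel (η x : ℝ) : ℝ :=
  (Real.sin (2 * π * x) + Real.sin (2 * π * (1 + η) * x)) /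
    (2 * π * x * (1 - 4 * η ^ 2 * x ^ 2))

section raisedCosine

variable {η t x a : ℝ}

theorem continuous_raisedCosine (η : ℝ) : Continuous (raisedCosine η) := by
  unfold raisedCosine
  fun_prop

theorem even_raisedCosine (η : ℝ) : (raisedCosine η).Even := fun t ↦ by
  simp only [raisedCosine, abs_neg]

theorem raisedCosine_of_abs_le_one (ht : |t| ≤ 1) : raisedCosine η t = 1 := by
  rw [raisedCosine, max_eq_left (min_le_of_right_le (sub_nonpos.mpr ht))]
  simp

theorem raisedCosine_of_one_le_abs (ht₁ : 1 ≤ |t|) (ht₂ : |t| ≤ 1 + η) :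
    raisedCosine η t = Real.cos (π * (|t| - 1) / (2 * η)) ^ 2 := by
  rw [raisedCosine, min_eq_right (by linarith), max_eq_right (by linarith)]

theorem raisedCosine_of_one_add_le_abs (hη : 0 < η) (ht : 1 + η ≤ |t|) : raisedCosine η t = 0 := by
  have h_angle : π * η / (2 * η) = π / 2 := mul_div_mul_right π 2 hη.ne'
  rw [raisedCosine, min_eq_left (by linarith), max_eq_right hη.le, h_angle, Real.cos_pi_div_two,
    zero_pow two_ne_zero]

theorem integrable_raisedCosine (hη : 0 < η) : Integrable (raisedCosine η) :=
  (continuous_raisedCosine η).integrable_of_hasCompactSupport <|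
    HasCompactSupport.intro (isCompact_Icc (a := -(1 + η)) (b := 1 + η)) fun _ ht ↦
      raisedCosine_of_one_add_le_abs hη (not_le.mp (mt abs_le.mp ht)).le

theorem integral_raisedCosine_edge_mul_cos (hη : 0 < η) (ha : a ≠ 0) (haη : a ^ 2 ≠ (π / η) ^ 2) :
    ∫ t in 1..1 + η, raisedCosine η t * Real.cos (a * t) =
      (Real.sin (a * (1 + η)) - Real.sin a) / (2 * a) +
        a * (Real.sin a + Real.sin (a * (1 + η))) / (2 * ((π / η) ^ 2 - a ^ 2)) := by
  have h_half_angle : ∀ t ∈ Set.uIcc 1 (1 + η), raisedCosine η t * Real.cos (a * t) =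
      (Real.cos (a * t) + Real.cos (π / η * (t - 1)) * Real.cos (a * t)) / 2 := by
    intro t ht
    rw [Set.uIcc_of_le (by linarith)] at ht
    have h_abs : |t| = t := abs_of_nonneg (zero_le_one.trans ht.1)
    rw [raisedCosine_of_one_le_abs (h_abs.symm ▸ ht.1) (h_abs.symm ▸ ht.2), h_abs, Real.cos_sq,
      show 2 * (π * (t - 1) / (2 * η)) = π / η * (t - 1) by field_simp]
    ring
  rw [intervalIntegral.integral_congr h_half_angle, intervalIntegral.integral_div,
    intervalIntegral.integral_add (Continuous.intervalIntegrable (by fun_prop) _ _)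
      (Continuous.intervalIntegrable (by fun_prop) _ _),
    integral_cos_mul ha, integral_half_period_cos_mul_cos hη.ne' haη, mul_one, add_div, div_div,
    div_div, mul_comm a 2, mul_comm _ (2 : ℝ)]

theorem integral_raisedCosine_mul_cos (hη : 0 < η) (ha : a ≠ 0) (haη : a ^ 2 ≠ (π / η) ^ 2) :
    ∫ t, raisedCosine η t * Real.cos (a * t) =
      (Real.sin a + Real.sin (a * (1 + η))) * (1 / a + a / ((π / η) ^ 2 - a ^ 2)) := by
  have h_plateau : ∫ t in 0..1, raisedCosine η t * Real.cos (a * t) = Real.sin a / a := by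
    have h_one : ∀ t ∈ Set.uIcc 0 1, raisedCosine η t * Real.cos (a * t) = Real.cos (a * t) := by
      intro t ht
      rw [Set.uIcc_of_le zero_le_one] at ht
      rw [raisedCosine_of_abs_le_one (abs_le.mpr ⟨by linarith [ht.1], ht.2⟩), one_mul]
    rw [intervalIntegral.integral_congr h_one, integral_cos_mul ha]
    simp
  have h_even : Function.Even fun t ↦ raisedCosine η t * Real.cos (a * t) := fun t ↦ by
    beta_reduce
    rw [(even_raisedCosine η).eq, mul_neg, Real.cos_neg]
  have h_cont : Continuous fun t ↦ raisedCosine η t * Real.cos (a * t) :=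
    (continuous_raisedCosine η).mul (by fun_prop)
  rw [integral_eq_two_mul_intervalIntegral_of_even h_even (c := 1 + η) (by linarith) fun t ht ↦ by
      rw [raisedCosine_of_one_add_le_abs hη (ht.trans (le_abs_self t)), zero_mul],
    ← intervalIntegral.integral_add_adjacent_intervals (b := 1) (h_cont.intervalIntegrable _ _)
      (h_cont.intervalIntegrable _ _), h_plateau, integral_raisedCosine_edge_mul_cos hη ha haη]
  have h_sq : (π / η) ^ 2 - a ^ 2 ≠ 0 := sub_ne_zero.mpr haη.symm
  generalize (π / η) ^ 2 - a ^ 2 = d at h_sq ⊢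
  field_simp
  ring

theorem fourier_raisedCosine (hη : 0 < η) (hx : x ≠ 0) (hxη : (2 * η * x) ^ 2 ≠ 1) :
    𝓕 (fun t ↦ (raisedCosine η t : ℂ)) x = raisedCosineKernel η x := by
  have h_quad : 1 - 4 * η ^ 2 * x ^ 2 ≠ 0 := fun h ↦ hxη (by linear_combination -h)
  have h_freq : (π / η) ^ 2 - (2 * π * x) ^ 2 = (π / η) ^ 2 * (1 - 4 * η ^ 2 * x ^ 2) := by
    field_simp
    ring
  have h_nonres : (2 * π * x) ^ 2 ≠ (π / η) ^ 2 :=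
    (sub_ne_zero.mp (h_freq ▸ by positivity)).symm
  have h_partial_fractions : 1 / (2 * π * x) + 2 * π * x / ((π / η) ^ 2 - (2 * π * x) ^ 2) =
      1 / (2 * π * x * (1 - 4 * η ^ 2 * x ^ 2)) := by
    rw [h_freq]
    generalize hq : 1 - 4 * η ^ 2 * x ^ 2 = q at h_quad ⊢
    field_simp
    linear_combination -hq
  rw [fourier_ofReal_of_even (integrable_raisedCosine hη) (even_raisedCosine η),
    integral_raisedCosine_mul_cos hη (by positivity) h_nonres, h_partial_fractions,
    mul_one_div, mul_right_comm (2 * π) x, raisedCosineKernel]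

theorem norm_raisedCosineKernel_le (hx : 1 ≤ x ^ 2) (hxη : 1 ≤ η ^ 2 * x ^ 2) :
    ‖raisedCosineKernel η x‖ ≤ 2 / η ^ 2 * (1 + x ^ 2)⁻¹ := by
  have hη : η ≠ 0 := by
    rintro rfl
    norm_num at hxη
  have h_num : |Real.sin (2 * π * x) + Real.sin (2 * π * (1 + η) * x)| ≤ 2 := by
    linarith [abs_add_le (Real.sin (2 * π * x)) (Real.sin (2 * π * (1 + η) * x)),
      Real.abs_sin_le_one (2 * π * x), Real.abs_sin_le_one (2 * π * (1 + η) * x)]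
  have h_linear : 1 ≤ |2 * π * x| := by
    rw [abs_mul, abs_of_pos two_pi_pos]
    nlinarith [pi_gt_three, (one_le_sq_iff_one_le_abs x).mp hx]
  have h_quad : η ^ 2 * (1 + x ^ 2) ≤ |1 - 4 * η ^ 2 * x ^ 2| := by
    rw [abs_of_nonpos (by linarith)]
    nlinarith [mul_le_mul_of_nonneg_left hx (sq_nonneg η)]
  have h_den : η ^ 2 * (1 + x ^ 2) ≤ |2 * π * x * (1 - 4 * η ^ 2 * x ^ 2)| := by
    rw [abs_mul]
    exact h_quad.trans (le_mul_of_one_le_left (abs_nonneg _) h_linear)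
  calc ‖raisedCosineKernel η x‖ ≤ 2 / (η ^ 2 * (1 + x ^ 2)) := by
        rw [raisedCosineKernel, norm_div, Real.norm_eq_abs, Real.norm_eq_abs]
        gcongr
    _ = 2 / η ^ 2 * (1 + x ^ 2)⁻¹ := by rw [← div_div, div_eq_mul_inv]

theorem integrable_fourier_raisedCosine (hη : 0 < η) :
    Integrable (𝓕 fun t ↦ (raisedCosine η t : ℂ)) := by
  refine (continuous_fourier (integrable_raisedCosine hη).ofReal).locallyIntegrable
    |>.integrable_of_isBigO_cocompact (g := fun x : ℝ ↦ (1 + x ^ 2)⁻¹)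
      (Asymptotics.IsBigO.of_bound (2 / η ^ 2) ?_) (integrable_inv_one_add_sq.integrableAtFilter _)
  filter_upwards [tendsto_norm_cocompact_atTop.eventually_ge_atTop (1 : ℝ),
    tendsto_norm_cocompact_atTop.eventually_ge_atTop (1 / η)] with x hx hx'
  have hx_sq : 1 ≤ x ^ 2 := (one_le_sq_iff_one_le_abs x).mpr hx
  have hxη_sq : 1 ≤ η ^ 2 * x ^ 2 := by
    rw [← mul_pow, one_le_sq_iff_one_le_abs, abs_mul, abs_of_pos hη]
    exact (div_le_iff₀' hη).mp hx'
  rw [fourier_raisedCosine hη (by rintro rfl; norm_num at hx_sq) (by nlinarith),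
    Complex.norm_real, Real.norm_of_nonneg (by positivity : 0 ≤ (1 + x ^ 2)⁻¹)]
  exact norm_raisedCosineKernel_le hx_sq hxη_sq

theorem fourier_raisedCosine_eq_of_continuous (hη : 0 < η) {K : ℝ → ℝ} (hK : Continuous K)
    (hKeq : ∀ x, x ≠ 0 → x ≠ 1 / (2 * η) → x ≠ -(1 / (2 * η)) → K x = raisedCosineKernel η x) :
    𝓕 (fun t ↦ (raisedCosine η t : ℂ)) = fun x ↦ (K x : ℂ) := by
  have h_dense : Dense ({0, 1 / (2 * η), -(1 / (2 * η))} : Set ℝ)ᶜ :=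
    (Set.toFinite _).countable.dense_compl ℝ
  refine Continuous.ext_on h_dense (continuous_fourier (integrable_raisedCosine hη).ofReal)
    (Complex.continuous_ofReal.comp hK) fun x hx ↦ ?_
  simp only [Set.mem_compl_iff, Set.mem_insert_iff, Set.mem_singleton_iff, not_or] at hx
  obtain ⟨hx_zero, hx_pos, hx_neg⟩ := hx
  have hxη : (2 * η * x) ^ 2 ≠ 1 := by
    rw [sq_ne_one_iff]
    constructor <;> intro h
    · exact hx_pos (by field_simp; linarith)
    · exact hx_neg (by field_simp; linarith)
  rw [fourier_raisedCosine hη hx_zero hxη, hKeq x hx_zero hx_pos hx_neg]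

end raisedCosine

/-- **Fourier transform of the kernel `K_η`.** If `K` is the continuous extension of
`x ↦ (sin(2πx) + sin(2π(1+η)x)) / (2πx(1 - 4η²x²))`, then its Fourier transform equals `1`
for `|t| ≤ 1`, `cos²(π(|t|-1)/(2η))` for `1 ≤ |t| ≤ 1+η`, and `0` for `|t| ≥ 1+η`. -/
theorem fourier_transform_K_eta (η : ℝ) (hη : 0 < η) (K : ℝ → ℝ) (hK : Continuous K)
    (hKeq : ∀ x : ℝ, x ≠ 0 → x ≠ 1 / (2 * η) → x ≠ -(1 / (2 * η)) →
      K x = (Real.sin (2 * π * x) + Real.sin (2 * π * (1 + η) * x)) /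
        (2 * π * x * (1 - 4 * η ^ 2 * x ^ 2)))
    (t : ℝ) :
    (|t| ≤ 1 →
      (∫ x : ℝ, (K x : ℂ) * Complex.exp (-(2 * (π : ℂ)) * Complex.I * (t : ℂ) * (x : ℂ))) = 1) ∧
    (1 ≤ |t| → |t| ≤ 1 + η →
      (∫ x : ℝ, (K x : ℂ) * Complex.exp (-(2 * (π : ℂ)) * Complex.I * (t : ℂ) * (x : ℂ)))
        = (((Real.cos (π * (|t| - 1) / (2 * η))) ^ 2 : ℝ) : ℂ)) ∧
    (1 + η ≤ |t| →
      (∫ x : ℝ, (K x : ℂ) * Complex.exp (-(2 * (π : ℂ)) * Complex.I * (t : ℂ) * (x : ℂ))) = 0) := by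
  have h_fourier : 𝓕 (fun x ↦ (K x : ℂ)) = fun t ↦ (raisedCosine η t : ℂ) := by
    rw [← fourier_raisedCosine_eq_of_continuous hη hK hKeq]
    exact fourier_fourier_of_even (Complex.continuous_ofReal.comp (continuous_raisedCosine η))
      (integrable_raisedCosine hη).ofReal (integrable_fourier_raisedCosine hη)
      ((even_raisedCosine η).left_comp Complex.ofReal)
  have h_integral :
      ∫ x : ℝ, (K x : ℂ) * Complex.exp (-(2 * (π : ℂ)) * Complex.I * (t : ℂ) * (x : ℂ)) =
        raisedCosine η t := by
    rw [← congrFun h_fourier t, Real.fourier_real_eq_integral_exp_smul]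
    congr 1 with x
    rw [smul_eq_mul, mul_comm]
    congr 2
    push_cast
    ring
  rw [h_integral]
  exact ⟨fun ht ↦ by rw [raisedCosine_of_abs_le_one ht, ofReal_one],
    fun ht₁ ht₂ ↦ by rw [raisedCosine_of_one_le_abs ht₁ ht₂],
    fun ht ↦ by rw [raisedCosine_of_one_add_le_abs hη ht, ofReal_zero]⟩
end

section
/- There exists an absolute constant C > 0 such that for all η with 0 < η ≤ 1 and all x ∈ ℝ (away from the removable singularities, where K_η is understood via its continuous extension), |K_η″(x)| ≤ C·min{1, η^{−3}|x|^{−3}}. -/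
open Real MeasureTheory

open scoped ContDiff

/-!
The numerator of `K_η` is `2 sin(π(2+η)x) cos(πηx)`, so
`K_η(x) = (2+η) sinc(π(2+η)x) Q(ηx)`, where `Q(y) = cos(πy) / (1 - 4y²)` is itself, by partial
fractions, a sum of two shifted `sinc`s. Since `sinc x = ∫₀¹ cos(tx) dt`, all derivatives of `sinc`
are bounded by `1`, so `K_η''` is bounded uniformly in `η ≤ 1`. For `|x| ≥ 1/η` the denominator
`P(x) = 2πx(1 - 4η²x²)` has size `η²|x|³ ≥ η³|x|³` and dominates `P'` and `P''`; differentiating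
`P K_η = sin(2πx) + sin(2π(1+η)x)` twice and solving for `K_η''` gives the decay.
-/

section Sinc

lemma abs_pow_mul_iteratedDeriv_cos_le_one (k : ℕ) {t : ℝ} (ht : t ∈ Set.uIoc (0 : ℝ) 1) (y : ℝ) :
    |t ^ k * iteratedDeriv k cos y| ≤ 1 := by
  rw [Set.uIoc_of_le zero_le_one] at ht
  rw [abs_mul, abs_pow, abs_of_pos ht.1]
  exact mul_le_one₀ (pow_le_one₀ ht.1.le ht.2) (abs_nonneg _) (abs_iteratedDeriv_cos_le_one k y)

lemma hasDerivAt_integral_pow_mul_iteratedDeriv_cos (k : ℕ) (x : ℝ) :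
    HasDerivAt (fun x ↦ ∫ t in (0 : ℝ)..1, t ^ k * iteratedDeriv k cos (t * x))
      (∫ t in (0 : ℝ)..1, t ^ (k + 1) * iteratedDeriv (k + 1) cos (t * x)) x := by
  have hcont (j : ℕ) (y : ℝ) : Continuous fun t : ℝ ↦ t ^ j * iteratedDeriv j cos (t * y) :=
    (continuous_pow j).mul ((differentiable_iteratedDeriv_cos j).continuous.comp (by fun_prop))
  have hderiv (t y : ℝ) : HasDerivAt (fun y ↦ t ^ k * iteratedDeriv k cos (t * y))
      (t ^ (k + 1) * iteratedDeriv (k + 1) cos (t * y)) y := by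
    have hcos : HasDerivAt (iteratedDeriv k cos) (iteratedDeriv (k + 1) cos (t * y)) (t * y) := by
      rw [iteratedDeriv_succ]
      exact (differentiable_iteratedDeriv_cos k (t * y)).hasDerivAt
    refine ((hcos.comp y (hasDerivAt_const_mul t)).const_mul (t ^ k)).congr_deriv ?_
    ring
  exact (intervalIntegral.hasDerivAt_integral_of_dominated_loc_of_deriv_le
    (bound := fun _ ↦ 1) Filter.univ_mem
    (.of_forall fun y ↦ (hcont k y).aestronglyMeasurable)
    ((hcont k x).intervalIntegrable _ _) (hcont (k + 1) x).aestronglyMeasurable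
    (.of_forall fun t ht y _ ↦ abs_pow_mul_iteratedDeriv_cos_le_one (k + 1) ht (t * y))
    (by simp) (.of_forall fun t _ y _ ↦ hderiv t y)).2

lemma mul_sinc (x : ℝ) : x * sinc x = sin x := by
  rcases eq_or_ne x 0 with rfl | hx
  · simp
  · rw [sinc_of_ne_zero hx, mul_div_cancel₀ _ hx]

lemma sinc_eq_integral_cos (x : ℝ) : sinc x = ∫ t in (0 : ℝ)..1, cos (t * x) := by
  rcases eq_or_ne x 0 with rfl | hx
  · simp
  · have hint : x * ∫ t in (0 : ℝ)..1, cos (t * x) = sin x := by simp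
    exact mul_left_cancel₀ hx ((mul_sinc x).trans hint.symm)

lemma iteratedDeriv_sinc (k : ℕ) :
    iteratedDeriv k sinc = fun x ↦ ∫ t in (0 : ℝ)..1, t ^ k * iteratedDeriv k cos (t * x) := by
  induction k with
  | zero => ext x; simp [sinc_eq_integral_cos]
  | succ k ih =>
    rw [iteratedDeriv_succ, ih]
    exact funext fun x ↦ (hasDerivAt_integral_pow_mul_iteratedDeriv_cos k x).deriv

lemma abs_iteratedDeriv_sinc_le_one (k : ℕ) (x : ℝ) : |iteratedDeriv k sinc x| ≤ 1 := by
  rw [iteratedDeriv_sinc]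
  simpa using intervalIntegral.norm_integral_le_of_norm_le_const (a := 0) (b := 1)
    (f := fun t : ℝ ↦ t ^ k * iteratedDeriv k cos (t * x)) (C := 1)
    fun t ht ↦ abs_pow_mul_iteratedDeriv_cos_le_one k ht (t * x)

lemma contDiff_sinc : ContDiff ℝ ∞ sinc :=
  contDiff_of_differentiable_iteratedDeriv fun k _ x ↦ by
    rw [iteratedDeriv_sinc]
    exact (hasDerivAt_integral_pow_mul_iteratedDeriv_cos k x).differentiableAt

end Sinc

/-- The derivatives of the smooth function `f` grow at most geometrically, `|f⁽ᵏ⁾| ≤ M rᵏ` on all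
of `ℝ`, as Bernstein's inequality gives for functions with spectrum in `[-r, r]`. -/
structure BernsteinBound (M r : ℝ) (f : ℝ → ℝ) : Prop where
  contDiff : ContDiff ℝ ∞ f
  abs_iteratedDeriv_le (k : ℕ) (x : ℝ) : |iteratedDeriv k f x| ≤ M * r ^ k

namespace BernsteinBound

variable {M N r s : ℝ} {f g : ℝ → ℝ}

protected lemma sin : BernsteinBound 1 1 Real.sin :=
  ⟨contDiff_sin, fun k x ↦ by simpa using abs_iteratedDeriv_sin_le_one k x⟩

protected lemma sinc : BernsteinBound 1 1 Real.sinc :=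
  ⟨contDiff_sinc, fun k x ↦ by simpa using abs_iteratedDeriv_sinc_le_one k x⟩

lemma contDiffAt (hf : BernsteinBound M r f) (n : ℕ) (x : ℝ) : ContDiffAt ℝ n f x :=
  (hf.contDiff.of_le (by exact_mod_cast le_top)).contDiffAt

lemma nonneg (hf : BernsteinBound M r f) : 0 ≤ M := by
  simpa using (abs_nonneg _).trans (hf.abs_iteratedDeriv_le 0 0)

lemma mono (hf : BernsteinBound M r f) (hr : 0 ≤ r) (hrs : r ≤ s) : BernsteinBound M s f :=
  ⟨hf.contDiff, fun k x ↦ (hf.abs_iteratedDeriv_le k x).trans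
    (mul_le_mul_of_nonneg_left (pow_le_pow_left₀ hr hrs k) hf.nonneg)⟩

protected lemma add (hf : BernsteinBound M r f) (hg : BernsteinBound N r g) :
    BernsteinBound (M + N) r (f + g) where
  contDiff := hf.contDiff.add hg.contDiff
  abs_iteratedDeriv_le k x := by
    rw [iteratedDeriv_add (hf.contDiffAt k x) (hg.contDiffAt k x), add_mul]
    exact (abs_add_le _ _).trans
      (add_le_add (hf.abs_iteratedDeriv_le k x) (hg.abs_iteratedDeriv_le k x))

lemma const_mul (hf : BernsteinBound M r f) (c : ℝ) :
    BernsteinBound (|c| * M) r (fun x ↦ c * f x) where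
  contDiff := contDiff_const.mul hf.contDiff
  abs_iteratedDeriv_le k x := by
    rw [iteratedDeriv_const_mul_field, abs_mul, mul_assoc]
    exact mul_le_mul_of_nonneg_left (hf.abs_iteratedDeriv_le k x) (abs_nonneg c)

protected lemma mul (hf : BernsteinBound M r f) (hg : BernsteinBound N s g) :
    BernsteinBound (M * N) (r + s) (f * g) where
  contDiff := hf.contDiff.mul hg.contDiff
  abs_iteratedDeriv_le k x := by
    rw [iteratedDeriv_mul (hf.contDiffAt k x) (hg.contDiffAt k x), add_pow, Finset.mul_sum]
    refine (Finset.abs_sum_le_sum_abs _ _).trans (Finset.sum_le_sum fun i _ ↦ ?_)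
    have hfi := hf.abs_iteratedDeriv_le i x
    calc |(k.choose i : ℝ) * iteratedDeriv i f x * iteratedDeriv (k - i) g x|
        = k.choose i * (|iteratedDeriv i f x| * |iteratedDeriv (k - i) g x|) := by
          rw [abs_mul, abs_mul, Nat.abs_cast, mul_assoc]
      _ ≤ k.choose i * ((M * r ^ i) * (N * s ^ (k - i))) :=
          mul_le_mul_of_nonneg_left (mul_le_mul hfi (hg.abs_iteratedDeriv_le _ x) (abs_nonneg _)
            ((abs_nonneg _).trans hfi)) (Nat.cast_nonneg _)
      _ = M * N * (r ^ i * s ^ (k - i) * k.choose i) := by ring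

lemma comp_affine (hf : BernsteinBound M r f) (c d : ℝ) :
    BernsteinBound M (|c| * r) (fun x ↦ f (d + c * x)) where
  contDiff := hf.contDiff.comp (by fun_prop)
  abs_iteratedDeriv_le k x := by
    have hshift : ContDiff ℝ k fun y ↦ f (d + y) :=
      (hf.contDiff.of_le (by exact_mod_cast le_top)).comp (by fun_prop)
    rw [iteratedDeriv_comp_const_mul hshift c, iteratedDeriv_comp_const_add, abs_mul, abs_pow]
    calc |c| ^ k * |iteratedDeriv k f (d + c * x)|
        ≤ |c| ^ k * (M * r ^ k) :=
          mul_le_mul_of_nonneg_left (hf.abs_iteratedDeriv_le k _) (by positivity)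
      _ = M * (|c| * r) ^ k := by ring

lemma comp_mul_left (hf : BernsteinBound M r f) (c : ℝ) :
    BernsteinBound M (|c| * r) (fun x ↦ f (c * x)) := by
  simpa using hf.comp_affine c 0

end BernsteinBound

section Quotient

variable {P F : ℝ → ℝ} {x T A B M N r : ℝ}

lemma abs_mul_le_of_abs_le_mul {p v c b : ℝ} (hc : 0 ≤ c) (hp : |p| ≤ c * T) (hv : T * |v| ≤ b) :
    |p * v| ≤ c * b :=
  calc |p * v| = |p| * |v| := abs_mul p v
    _ ≤ c * T * |v| := mul_le_mul_of_nonneg_right hp (abs_nonneg v)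
    _ = c * (T * |v|) := mul_assoc _ _ _
    _ ≤ c * b := mul_le_mul_of_nonneg_left hv hc

lemma mul_abs_le_abs_mul {p : ℝ} (hp : T ≤ |p|) (v : ℝ) : T * |v| ≤ |p * v| := by
  rw [abs_mul]
  exact mul_le_mul_of_nonneg_right hp (abs_nonneg v)

lemma mul_abs_deriv_le_of_mul (hP : DifferentiableAt ℝ P x) (hF : DifferentiableAt ℝ F x)
    (hA : 0 ≤ A) (hPT : T ≤ |P x|) (hP' : |deriv P x| ≤ A * T)
    (hPF : |P x * F x| ≤ M) (hPF' : |deriv (P * F) x| ≤ N) :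
    T * |deriv F x| ≤ N + A * M := by
  have leibniz : P x * deriv F x = deriv (P * F) x - deriv P x * F x := by
    rw [deriv_mul hP hF]
    ring
  calc T * |deriv F x| ≤ |P x * deriv F x| := mul_abs_le_abs_mul hPT _
    _ ≤ |deriv (P * F) x| + |deriv P x * F x| := leibniz ▸ abs_sub _ _
    _ ≤ N + A * M := add_le_add hPF'
        (abs_mul_le_of_abs_le_mul hA hP' ((mul_abs_le_abs_mul hPT _).trans hPF))

lemma mul_abs_iteratedDeriv_two_le_of_mul (hP : ContDiffAt ℝ 2 P x) (hF : ContDiffAt ℝ 2 F x)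
    (hA : 0 ≤ A) (hB : 0 ≤ B) (hPT : T ≤ |P x|) (hP' : |deriv P x| ≤ A * T)
    (hP'' : |iteratedDeriv 2 P x| ≤ B * T)
    (hPF : ∀ k ≤ 2, |iteratedDeriv k (P * F) x| ≤ M * r ^ k) :
    T * |iteratedDeriv 2 F x| ≤ M * (r ^ 2 + 2 * A * (r + A) + B) := by
  have hPF₀ : |P x * F x| ≤ M := by simpa using hPF 0 zero_le_two
  have hPF₁ : |deriv (P * F) x| ≤ M * r := by simpa using hPF 1 one_le_two
  have hF' : T * |deriv F x| ≤ M * r + A * M :=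
    mul_abs_deriv_le_of_mul (hP.differentiableAt two_ne_zero) (hF.differentiableAt two_ne_zero)
      hA hPT hP' hPF₀ hPF₁
  have hcross := abs_mul_le_of_abs_le_mul hA hP' hF'
  have hlow := abs_mul_le_of_abs_le_mul hB hP'' ((mul_abs_le_abs_mul hPT _).trans hPF₀)
  have leibniz : P x * iteratedDeriv 2 F x = iteratedDeriv 2 (P * F) x
      - (2 * (deriv P x * deriv F x) + iteratedDeriv 2 P x * F x) := by
    rw [iteratedDeriv_mul hP hF]
    simp only [Finset.sum_range_succ, Finset.sum_range_zero, Nat.choose_zero_right,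
      Nat.choose_succ_self_right, Nat.choose_self, Nat.reduceAdd, Nat.reduceSub, Nat.cast_one,
      Nat.cast_ofNat, iteratedDeriv_zero, iteratedDeriv_one]
    ring
  calc T * |iteratedDeriv 2 F x|
      ≤ |P x * iteratedDeriv 2 F x| := mul_abs_le_abs_mul hPT _
    _ ≤ |iteratedDeriv 2 (P * F) x| + |2 * (deriv P x * deriv F x) + iteratedDeriv 2 P x * F x| :=
        leibniz ▸ abs_sub _ _
    _ ≤ |iteratedDeriv 2 (P * F) x| + (2 * |deriv P x * deriv F x| + |iteratedDeriv 2 P x * F x|) :=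
        by grw [abs_add_le, abs_mul 2, abs_two]
    _ ≤ M * r ^ 2 + (2 * (A * (M * r + A * M)) + B * M) := by grw [hPF 2 le_rfl, hcross, hlow]
    _ = M * (r ^ 2 + 2 * A * (r + A) + B) := by ring

end Quotient

/-- The continuous extension of `cos (π y) / (1 - 4 y²)` to `y = ± 1 / 2`, in its partial fraction
form. -/
noncomputable def cosQuotient (y : ℝ) : ℝ :=
  π / 4 * (sinc (π / 2 + π * y) + sinc (π / 2 - π * y))

lemma one_sub_mul_cosQuotient (y : ℝ) : (1 - 4 * y ^ 2) * cosQuotient y = cos (π * y) := by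
  have hadd : (π / 2 + π * y) * sinc (π / 2 + π * y) = cos (π * y) := by
    rw [mul_sinc, add_comm, sin_add_pi_div_two]
  have hsub : (π / 2 - π * y) * sinc (π / 2 - π * y) = cos (π * y) := by
    rw [mul_sinc, sin_pi_div_two_sub]
  rw [cosQuotient]
  linear_combination (1 - 2 * y) / 2 * hadd + (1 + 2 * y) / 2 * hsub

lemma bernsteinBound_cosQuotient : BernsteinBound (π / 2) π cosQuotient := by
  have hadd : BernsteinBound 1 π fun y ↦ sinc (π / 2 + π * y) := by
    simpa [abs_of_pos pi_pos] using BernsteinBound.sinc.comp_affine π (π / 2)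
  have hsub : BernsteinBound 1 π fun y ↦ sinc (π / 2 - π * y) := by
    simpa [abs_of_pos pi_pos, ← sub_eq_add_neg] using BernsteinBound.sinc.comp_affine (-π) (π / 2)
  convert (hadd.add hsub).const_mul (π / 4) using 1
  · rw [abs_of_pos (by positivity)]
    ring
  · rfl

/-- The continuous extension of `K_η` to `0` and `± 1 / (2 η)`, as a product of entire factors. -/
noncomputable def smoothKernel (η x : ℝ) : ℝ :=
  (2 + η) * (sinc (π * (2 + η) * x) * cosQuotient (η * x))

/-- The denominator of `K_η`. -/
noncomputable def kernelDenominator (η x : ℝ) : ℝ :=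
  2 * π * x * (1 - 4 * η ^ 2 * x ^ 2)

section Kernel

variable {η x : ℝ}

lemma kernelDenominator_mul_smoothKernel (η x : ℝ) :
    kernelDenominator η x * smoothKernel η x = sin (2 * π * x) + sin (2 * π * (1 + η) * x) := by
  have hsin := mul_sinc (π * (2 + η) * x)
  have hcos := one_sub_mul_cosQuotient (η * x)
  have hprod : sin (2 * π * x) + sin (2 * π * (1 + η) * x)
      = 2 * sin (π * (2 + η) * x) * cos (π * (η * x)) := by
    rw [two_mul_sin_mul_cos]
    ring_nf
  rw [hprod, ← hsin, ← hcos, kernelDenominator, smoothKernel]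
  ring

lemma kernelDenominator_ne_zero (hη : η ≠ 0) (hx : x ≠ 0) (hx₁ : x ≠ 1 / (2 * η))
    (hx₂ : x ≠ -(1 / (2 * η))) : kernelDenominator η x ≠ 0 := by
  have hfactor : kernelDenominator η x
      = -(8 * π * η ^ 2) * (x * ((x - 1 / (2 * η)) * (x - -(1 / (2 * η))))) := by
    rw [kernelDenominator]
    field_simp
    ring
  rw [hfactor]
  exact mul_ne_zero (by simp [hη, pi_ne_zero])
    (mul_ne_zero hx (mul_ne_zero (sub_ne_zero.2 hx₁) (sub_ne_zero.2 hx₂)))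

lemma bernsteinBound_smoothKernel (hη : 0 ≤ η) :
    BernsteinBound ((2 + η) * (π / 2)) (2 * π * (1 + η)) (smoothKernel η) := by
  have hsinc := BernsteinBound.sinc.comp_mul_left (π * (2 + η))
  have hcos := bernsteinBound_cosQuotient.comp_mul_left η
  convert (hsinc.mul hcos).const_mul (2 + η) using 1
  · rw [abs_of_nonneg (by positivity), one_mul]
  · rw [abs_of_nonneg (by positivity), abs_of_nonneg hη]
    ring
  · rfl

lemma bernsteinBound_kernelDenominator_mul_smoothKernel (hη : 0 ≤ η) :
    BernsteinBound 2 (2 * π * (1 + η)) (kernelDenominator η * smoothKernel η) := by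
  have hnum : kernelDenominator η * smoothKernel η
      = (fun x ↦ sin (2 * π * x)) + fun x ↦ sin (2 * π * (1 + η) * x) :=
    funext (kernelDenominator_mul_smoothKernel η)
  have hlow : BernsteinBound 1 (2 * π) fun x ↦ sin (2 * π * x) := by
    simpa [abs_of_pos pi_pos] using BernsteinBound.sin.comp_mul_left (2 * π)
  have hhigh : BernsteinBound 1 (2 * π * (1 + η)) fun x ↦ sin (2 * π * (1 + η) * x) := by
    simpa only [mul_one, abs_of_nonneg (show 0 ≤ 2 * π * (1 + η) by positivity)] using
      BernsteinBound.sin.comp_mul_left (2 * π * (1 + η))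
  have hlow' : BernsteinBound 1 (2 * π * (1 + η)) fun x ↦ sin (2 * π * x) :=
    hlow.mono two_pi_pos.le (le_mul_of_one_le_right two_pi_pos.le (by linarith))
  rw [hnum]
  simpa only [one_add_one_eq_two] using hlow'.add hhigh

lemma eq_smoothKernel_of_continuous {K : ℝ → ℝ} (hη : η ≠ 0) (hK : Continuous K)
    (hKeq : ∀ x : ℝ, x ≠ 0 → x ≠ 1 / (2 * η) → x ≠ -(1 / (2 * η)) →
      K x = (sin (2 * π * x) + sin (2 * π * (1 + η) * x)) / kernelDenominator η x) :
    K = smoothKernel η := by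
  have hdense : Dense ({0, 1 / (2 * η), -(1 / (2 * η))}ᶜ : Set ℝ) :=
    (Set.toFinite _).countable.dense_compl ℝ
  have hcont : Continuous (smoothKernel η) := by
    have := bernsteinBound_cosQuotient.contDiff.continuous
    unfold smoothKernel
    fun_prop
  refine hK.ext_on hdense hcont fun x hx ↦ ?_
  simp only [Set.mem_compl_iff, Set.mem_insert_iff, Set.mem_singleton_iff, not_or] at hx
  obtain ⟨hx₀, hx₁, hx₂⟩ := hx
  rw [hKeq x hx₀ hx₁ hx₂, ← kernelDenominator_mul_smoothKernel,
    mul_div_cancel_left₀ _ (kernelDenominator_ne_zero hη hx₀ hx₁ hx₂)]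

lemma abs_iteratedDeriv_two_smoothKernel_le (hη : 0 ≤ η) (hη₁ : η ≤ 1) (x : ℝ) :
    |iteratedDeriv 2 (smoothKernel η) x| ≤ 24 * π ^ 3 :=
  calc |iteratedDeriv 2 (smoothKernel η) x|
      ≤ (2 + η) * (π / 2) * (2 * π * (1 + η)) ^ 2 :=
        (bernsteinBound_smoothKernel hη).abs_iteratedDeriv_le 2 x
    _ ≤ (2 + 1) * (π / 2) * (2 * π * (1 + 1)) ^ 2 := by gcongr
    _ = 24 * π ^ 3 := by ring

lemma contDiff_kernelDenominator (n : WithTop ℕ∞) (η : ℝ) : ContDiff ℝ n (kernelDenominator η) := by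
  unfold kernelDenominator
  fun_prop

lemma deriv_kernelDenominator (η : ℝ) :
    deriv (kernelDenominator η) = fun x ↦ 2 * π * (1 - 12 * η ^ 2 * x ^ 2) := by
  ext x
  refine HasDerivAt.deriv ?_
  refine ((hasDerivAt_const_mul (2 * π)).mul
    (((hasDerivAt_pow 2 x).const_mul (4 * η ^ 2)).const_sub 1)).congr_deriv ?_
  push_cast
  ring

lemma iteratedDeriv_two_kernelDenominator (η : ℝ) :
    iteratedDeriv 2 (kernelDenominator η) = fun x ↦ -(48 * π * η ^ 2 * x) := by
  ext x
  rw [iteratedDeriv_succ, iteratedDeriv_one, deriv_kernelDenominator]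
  refine HasDerivAt.deriv ?_
  refine ((((hasDerivAt_pow 2 x).const_mul (12 * η ^ 2)).const_sub 1).const_mul
    (2 * π)).congr_deriv ?_
  push_cast
  ring

lemma le_abs_kernelDenominator (hx : 1 ≤ η ^ 2 * x ^ 2) :
    6 * π * η ^ 2 * |x| ^ 3 ≤ |kernelDenominator η x| := by
  have habs : |kernelDenominator η x| = 2 * π * |x| * (4 * (η ^ 2 * x ^ 2) - 1) := by
    have hnonneg : 0 ≤ 4 * (η ^ 2 * x ^ 2) - 1 := by linarith
    rw [kernelDenominator, abs_mul, abs_mul, abs_of_pos two_pi_pos, mul_assoc 4,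
      abs_sub_comm (1 : ℝ), abs_of_nonneg hnonneg]
  rw [habs]
  calc 6 * π * η ^ 2 * |x| ^ 3 = 2 * π * |x| * (3 * (η ^ 2 * x ^ 2)) := by
        rw [← sq_abs x]
        ring
    _ ≤ 2 * π * |x| * (4 * (η ^ 2 * x ^ 2) - 1) := by gcongr; linarith

lemma abs_deriv_kernelDenominator_le (hx : 1 ≤ η ^ 2 * x ^ 2) (hx₁ : 1 ≤ |x|) :
    |deriv (kernelDenominator η) x| ≤ 4 * (6 * π * η ^ 2 * |x| ^ 3) := by
  have habs : |deriv (kernelDenominator η) x| = 2 * π * (12 * (η ^ 2 * x ^ 2) - 1) := by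
    rw [deriv_kernelDenominator, abs_mul, abs_of_pos two_pi_pos, mul_assoc 12,
      abs_sub_comm, abs_of_nonneg (by linarith)]
  calc |deriv (kernelDenominator η) x| ≤ 2 * π * (12 * (η ^ 2 * x ^ 2)) := by
        rw [habs]
        gcongr
        linarith
    _ = 4 * (6 * π * η ^ 2 * |x| ^ 2) := by
        rw [sq_abs]
        ring
    _ ≤ 4 * (6 * π * η ^ 2 * |x| ^ 3) := by gcongr; norm_num

lemma abs_iteratedDeriv_two_kernelDenominator_le (hx₁ : 1 ≤ |x|) :
    |iteratedDeriv 2 (kernelDenominator η) x| ≤ 8 * (6 * π * η ^ 2 * |x| ^ 3) :=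
  calc |iteratedDeriv 2 (kernelDenominator η) x| = 8 * (6 * π * η ^ 2 * |x|) := by
        rw [iteratedDeriv_two_kernelDenominator, abs_neg, abs_mul, abs_of_nonneg (by positivity)]
        ring
    _ ≤ 8 * (6 * π * η ^ 2 * |x| ^ 3) := by
        gcongr
        exact le_self_pow₀ hx₁ three_ne_zero

lemma abs_iteratedDeriv_two_smoothKernel_le_of_one_le (hη : 0 < η) (hη₁ : η ≤ 1)
    (hx : 1 ≤ η * |x|) :
    |iteratedDeriv 2 (smoothKernel η) x| ≤ 24 * π ^ 3 * (1 / (η ^ 3 * |x| ^ 3)) := by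
  have hx_one : 1 ≤ |x| := hx.trans (mul_le_of_le_one_left (abs_nonneg x) hη₁)
  have hx_sq : 1 ≤ η ^ 2 * x ^ 2 := by
    rw [← sq_abs x, ← mul_pow]
    exact one_le_pow₀ hx
  have hquot := mul_abs_iteratedDeriv_two_le_of_mul (A := 4) (B := 8)
    (contDiff_kernelDenominator 2 η).contDiffAt
    ((bernsteinBound_smoothKernel hη.le).contDiffAt 2 x) (by norm_num) (by norm_num)
    (le_abs_kernelDenominator hx_sq) (abs_deriv_kernelDenominator_le hx_sq hx_one)
    (abs_iteratedDeriv_two_kernelDenominator_le hx_one)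
    fun k _ ↦ (bernsteinBound_kernelDenominator_mul_smoothKernel hη.le).abs_iteratedDeriv_le k x
  rw [mul_one_div, le_div_iff₀ (by positivity)]
  refine le_of_mul_le_mul_left (?_ : 6 * π * _ ≤ 6 * π * _) (by positivity)
  calc 6 * π * (|iteratedDeriv 2 (smoothKernel η) x| * (η ^ 3 * |x| ^ 3))
      = η * (6 * π * η ^ 2 * |x| ^ 3 * |iteratedDeriv 2 (smoothKernel η) x|) := by ring
    _ ≤ 6 * π * η ^ 2 * |x| ^ 3 * |iteratedDeriv 2 (smoothKernel η) x| :=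
        mul_le_of_le_one_left (by positivity) hη₁
    _ ≤ 2 * ((2 * π * (1 + η)) ^ 2 + 2 * 4 * (2 * π * (1 + η) + 4) + 8) := hquot
    _ ≤ 2 * ((2 * π * (1 + 1)) ^ 2 + 2 * 4 * (2 * π * (1 + 1) + 4) + 8) := by gcongr
    _ ≤ 6 * π * (24 * π ^ 3) := by nlinarith [pi_gt_three, pow_pos pi_pos 2, pow_pos pi_pos 3]

lemma abs_iteratedDeriv_two_smoothKernel_le_min (hη : 0 < η) (hη₁ : η ≤ 1) (hx : x ≠ 0) :
    |iteratedDeriv 2 (smoothKernel η) x| ≤ 24 * π ^ 3 * min 1 (1 / (η ^ 3 * |x| ^ 3)) := by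
  have hbounded := abs_iteratedDeriv_two_smoothKernel_le hη.le hη₁ x
  rcases le_total 1 (η * |x|) with hfar | hnear
  · rw [mul_min_of_nonneg _ _ (by positivity), mul_one]
    exact le_min hbounded (abs_iteratedDeriv_two_smoothKernel_le_of_one_le hη hη₁ hfar)
  · have hone : 1 ≤ 1 / (η ^ 3 * |x| ^ 3) := by
      rw [← mul_pow]
      exact one_le_one_div (by positivity) (pow_le_one₀ (by positivity) hnear)
    rwa [min_eq_left hone, mul_one]

end Kernel

/-- **Second-derivative bound for the kernel `K_η`.** There is an absolute constant `C > 0`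
such that for `0 < η ≤ 1`, the continuous extension `K` of
`x ↦ (sin(2πx) + sin(2π(1+η)x)) / (2πx(1 - 4η²x²))` satisfies
`|K″(x)| ≤ C · min{1, η⁻³|x|⁻³}` away from the removable singularities. -/
theorem K_eta_second_deriv_bound :
    ∃ C : ℝ, 0 < C ∧ ∀ η : ℝ, 0 < η → η ≤ 1 → ∀ K : ℝ → ℝ, Continuous K →
      (∀ x : ℝ, x ≠ 0 → x ≠ 1 / (2 * η) → x ≠ -(1 / (2 * η)) →
        K x = (Real.sin (2 * π * x) + Real.sin (2 * π * (1 + η) * x)) /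
          (2 * π * x * (1 - 4 * η ^ 2 * x ^ 2))) →
      ∀ x : ℝ, x ≠ 0 → x ≠ 1 / (2 * η) → x ≠ -(1 / (2 * η)) →
        |deriv (deriv K) x| ≤ C * min 1 (1 / (η ^ 3 * |x| ^ 3)) := by
  refine ⟨24 * π ^ 3, by positivity, fun η hη hη₁ K hK hKeq x hx _ _ ↦ ?_⟩
  obtain rfl : K = smoothKernel η := eq_smoothKernel_of_continuous hη.ne' hK hKeq
  rw [← iteratedDeriv_one, ← iteratedDeriv_succ']
  exact abs_iteratedDeriv_two_smoothKernel_le_min hη hη₁ hx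
end

section
/- For every η > 0 and every real t ≠ 0, the Fourier transform K̂_η(t) = ∫_{−∞}^{∞} K_η(x) e^{−2πitx} dx satisfies K̂_η(t) = ∫_{0}^{∞} K_η″(x)·(sin(πtx)/(πt))² dx. -/
open Real MeasureTheory Complex

open Filter Asymptotics Polynomial Set
open scoped FourierTransform

/-! Integrating by parts twice gives `𝓕 K'' u = -(2πu)² 𝓕 K u`; in particular `𝓕 K'' 0 = 0`, so
`(2πt)² 𝓕 K t = 𝓕 K'' 0 - 𝓕 K'' t`. As `K''` is even, the right-hand side is the integral over
`(0, ∞)` of `K'' x` against `2 - 2 cos (2πtx) = 4 sin² (πtx)`.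

The integrability of `K`, `K'` and `K''` comes from `p K = s`, where `p` is a cubic polynomial and
`s` has bounded derivatives: the derivatives of `p` are `O(p)`, so solving the Leibniz formula for
the top derivative of `K` shows inductively that every derivative of `K` is `O(1 / p)`. -/

section Even

variable {E : Type*} [NormedAddCommGroup E]

theorem integral_eq_integral_Ioi_add_comp_neg [NormedSpace ℝ E] {f : ℝ → E} (hf : Integrable f) :
    ∫ x, f x = ∫ x in Ioi 0, (f x + f (-x)) := by
  rw [integral_add hf.integrableOn hf.comp_neg.integrableOn, integral_comp_neg_Ioi, neg_zero,
    ← compl_Ioi, integral_add_compl measurableSet_Ioi hf]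

theorem iteratedDeriv_neg_of_even [NormedSpace ℝ E] {f : ℝ → E} (hf : Function.Even f) (n : ℕ)
    (x : ℝ) : iteratedDeriv n f (-x) = (-1 : ℝ) ^ n • iteratedDeriv n f x := by
  simpa only [funext hf, neg_neg] using iteratedDeriv_comp_neg n f (-x)

variable [NormedSpace ℂ E] {f : ℝ → E}

theorem fourier_eq_integral_Ioi_cos_smul_of_even (hf : Integrable f) (heven : Function.Even f)
    (t : ℝ) : 𝓕 f t = ∫ x in Ioi 0, (2 * Real.cos (2 * π * t * x)) • f x := by
  have hint : Integrable fun x ↦ 𝐞 (-(x * t)) • f x := by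
    simpa [mul_comm t] using (Real.fourierIntegral_convergent_iff t).2 hf
  have hcos (x : ℝ) : ((2 * Real.cos (2 * π * t * x) : ℝ) : ℂ) =
      𝐞 (-(x * t)) + 𝐞 (-(-x * t)) := by
    rw [Real.fourierChar_apply, Real.fourierChar_apply]
    push_cast
    rw [Complex.two_cos, add_comm]
    ring_nf
  rw [fourier_real_eq, integral_eq_integral_Ioi_add_comp_neg hint]
  refine setIntegral_congr_fun measurableSet_Ioi fun x _ ↦ ?_
  simp only [heven x, Circle.smul_def, ← add_smul, ← hcos, Complex.coe_smul]

theorem fourier_iteratedDeriv_two (hf : ContDiff ℝ 2 f)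
    (hint : ∀ n ≤ 2, Integrable (iteratedDeriv n f)) (t : ℝ) :
    𝓕 (iteratedDeriv 2 f) t = -(2 * π * t) ^ 2 • 𝓕 f t := by
  have hsq : (2 * π * Complex.I * t) ^ 2 = ((-(2 * π * t) ^ 2 : ℝ) : ℂ) := by
    push_cast
    linear_combination (2 * π * t : ℂ) ^ 2 * Complex.I_sq
  rw [fourier_iteratedDeriv (N := 2) hf (fun n hn ↦ hint n (by exact_mod_cast hn)) le_rfl]
  simp only [hsq, Complex.coe_smul]

theorem fourier_eq_integral_Ioi_sin_sq_smul_iteratedDeriv_two (hf : ContDiff ℝ 2 f)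
    (hint : ∀ n ≤ 2, Integrable (iteratedDeriv n f)) (heven : Function.Even f)
    {t : ℝ} (ht : t ≠ 0) :
    𝓕 f t = ∫ x in Ioi 0, (Real.sin (π * t * x) / (π * t)) ^ 2 • iteratedDeriv 2 f x := by
  set g := iteratedDeriv 2 f with hg
  have hgint : Integrable g := hint 2 le_rfl
  have hgeven : Function.Even g := fun x ↦ by simpa using iteratedDeriv_neg_of_even heven 2 x
  have hgcos (u : ℝ) : IntegrableOn (fun x ↦ (2 * Real.cos (2 * π * u * x)) • g x) (Ioi 0) := by
    refine (hgint.bdd_smul (𝕜 := ℝ) 2 (by fun_prop) (.of_forall fun x ↦ ?_)).integrableOn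
    simpa using Real.abs_cos_le_one _
  have hweight (x : ℝ) : ((2 * π * t) ^ 2)⁻¹ *
      (2 * Real.cos (2 * π * 0 * x) - 2 * Real.cos (2 * π * t * x)) =
        (Real.sin (π * t * x) / (π * t)) ^ 2 := by
    rw [show 2 * π * t * x = 2 * (π * t * x) by ring, Real.cos_two_mul_eq_one_sub, mul_zero,
      zero_mul, Real.cos_zero]
    field_simp
    ring
  calc 𝓕 f t = ((2 * π * t) ^ 2)⁻¹ • (𝓕 g 0 - 𝓕 g t) := by
        simp only [hg, fourier_iteratedDeriv_two hf hint]
        simp [smul_smul, ht, Real.pi_ne_zero]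
    _ = ∫ x in Ioi 0, (Real.sin (π * t * x) / (π * t)) ^ 2 • g x := by
        simp only [fourier_eq_integral_Ioi_cos_smul_of_even hgint hgeven]
        rw [← integral_sub (hgcos 0) (hgcos t), ← integral_smul]
        simp only [← sub_smul, smul_smul, hweight]

end Even

section OfReal

variable {f : ℝ → ℝ}

theorem fourier_ofReal_eq_integral_mul_exp (f : ℝ → ℝ) (t : ℝ) :
    𝓕 (fun x ↦ (f x : ℂ)) t =
      ∫ x : ℝ, (f x : ℂ) * Complex.exp (-(2 * (π : ℂ)) * Complex.I * (t : ℂ) * (x : ℂ)) := by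
  rw [fourier_real_eq_integral_exp_smul]
  congr with x
  rw [smul_eq_mul, mul_comm]
  push_cast
  ring_nf

theorem iteratedDeriv_ofReal_comp {n : ℕ} (hf : ContDiff ℝ n f) :
    iteratedDeriv n (fun x ↦ (f x : ℂ)) = fun x ↦ ((iteratedDeriv n f x : ℝ) : ℂ) := by
  induction n with
  | zero => simp
  | succ n ih =>
    have hdiff : Differentiable ℝ (iteratedDeriv n f) :=
      hf.differentiable_iteratedDeriv n (by norm_cast; lia)
    ext x
    rw [iteratedDeriv_succ, iteratedDeriv_succ, ih (hf.of_le (by norm_cast; lia))]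
    exact (hdiff x).hasDerivAt.ofReal_comp.deriv

theorem fourier_ofReal_eq_integral_Ioi_deriv_deriv_mul_sin_sq (hf : ContDiff ℝ 2 f)
    (hint : ∀ n ≤ 2, Integrable (iteratedDeriv n f)) (heven : Function.Even f)
    {t : ℝ} (ht : t ≠ 0) :
    𝓕 (fun x ↦ (f x : ℂ)) t =
      ((∫ x in Ioi 0, deriv (deriv f) x * (Real.sin (π * t * x) / (π * t)) ^ 2 : ℝ) : ℂ) := by
  have hderiv (n : ℕ) (hn : n ≤ 2) : iteratedDeriv n (fun x ↦ (f x : ℂ)) =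
      fun x ↦ ((iteratedDeriv n f x : ℝ) : ℂ) :=
    iteratedDeriv_ofReal_comp (hf.of_le (by exact_mod_cast hn))
  have hsmooth : ContDiff ℝ 2 fun x ↦ (f x : ℂ) := Complex.ofRealCLM.contDiff.comp hf
  rw [fourier_eq_integral_Ioi_sin_sq_smul_iteratedDeriv_two hsmooth
    (fun n hn ↦ hderiv n hn ▸ (hint n hn).ofReal) (fun x ↦ by rw [heven x]) ht,
    hderiv 2 le_rfl, ← integral_complex_ofReal]
  simp only [iteratedDeriv_succ, iteratedDeriv_zero, Complex.real_smul, Complex.ofReal_mul,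
    mul_comm]

end OfReal

section PolynomialMul

variable {p : ℝ[X]} {s f : ℝ → ℝ}

theorem dense_setOf_eval_ne_zero (hp : p ≠ 0) : Dense {x | p.eval x ≠ 0} :=
  (finite_setOfPred_isRoot hp).countable.dense_compl ℝ

theorem eval_mul_eq_of_eq_div_eval (hp : p ≠ 0) (hs : Continuous s) (hf : Continuous f)
    (hfs : ∀ x, p.eval x ≠ 0 → f x = s x / p.eval x) (x : ℝ) : p.eval x * f x = s x := by
  refine congrFun (Continuous.ext_on (dense_setOf_eval_ne_zero hp)
    (f := fun x ↦ p.eval x * f x) (by fun_prop) hs fun y hy ↦ ?_) x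
  simp only [hfs y hy, mul_div_cancel₀ _ hy]

theorem analyticAt_of_eval_mul_eq (hp : p ≠ 0) {x : ℝ} (hs : AnalyticAt ℝ s x)
    (hf : ContinuousAt f x) (hfs : ∀ y, p.eval y * f y = s y) : AnalyticAt ℝ f x := by
  have hquot : MeromorphicAt (fun y ↦ s y / p.eval y) x :=
    hs.meromorphicAt.fun_div (AnalyticAt.aeval_polynomial analyticAt_id p).meromorphicAt
  refine (hquot.congr ?_).analyticAt hf
  filter_upwards [nhdsNE_le_cofinite x (eventually_cofinite_not_isRoot hp)] with y hy
  rw [← hfs y, mul_div_cancel_left₀ _ hy]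

theorem even_of_eval_mul_eq (hp : p ≠ 0) (hf : Continuous f) (hp_odd : ∀ x, p.eval (-x) = -p.eval x)
    (hs_odd : Function.Odd s) (hfs : ∀ x, p.eval x * f x = s x) : Function.Even f := by
  refine congrFun (Continuous.ext_on (dense_setOf_eval_ne_zero hp) (by fun_prop) hf fun x hx ↦ ?_)
  refine mul_left_cancel₀ hx ?_
  linear_combination f (-x) * hp_odd x - hfs (-x) - hs_odd x - hfs x

theorem iteratedDeriv_eval {𝕜 : Type*} [NontriviallyNormedField 𝕜] (p : 𝕜[X]) (n : ℕ) :
    iteratedDeriv n p.eval = (derivative^[n] p).eval := by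
  induction n with
  | zero => simp
  | succ n ih => ext x; rw [iteratedDeriv_succ, ih, Polynomial.deriv, Function.iterate_succ_apply']

theorem isBigO_iteratedDeriv_eval (p : ℝ[X]) (n : ℕ) :
    iteratedDeriv n p.eval =O[atTop] p.eval := by
  have hdegree : (derivative^[n] p).degree ≤ p.degree :=
    Function.Iterate.rec (fun q : ℝ[X] ↦ q.degree ≤ p.degree) le_rfl
      (fun _ ↦ degree_derivative_le.trans) n
  rw [iteratedDeriv_eval]
  exact isBigO_atTop_of_degree_le _ _ hdegree

theorem eval_mul_iteratedDeriv_eq {n : ℕ} (hf : ContDiff ℝ n f)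
    (hfs : ∀ x, p.eval x * f x = s x) (x : ℝ) :
    p.eval x * iteratedDeriv n f x = iteratedDeriv n s x - ∑ i ∈ Finset.range n,
      n.choose (i + 1) * (iteratedDeriv (i + 1) p.eval x * iteratedDeriv (n - (i + 1)) f x) := by
  have hp : ContDiffAt ℝ n p.eval x := (Polynomial.contDiff_aeval p n).contDiffAt
  rw [← funext hfs, iteratedDeriv_fun_mul hp hf.contDiffAt, Finset.sum_range_succ']
  simp [mul_assoc]

theorem isBigO_iteratedDeriv_inv_eval_of_eval_mul_eq (hp : p ≠ 0) {n : ℕ} (hf : ContDiff ℝ n f)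
    (hs : ∀ k ≤ n, iteratedDeriv k s =O[atTop] (1 : ℝ → ℝ)) (hfs : ∀ x, p.eval x * f x = s x) :
    iteratedDeriv n f =O[atTop] fun x ↦ (p.eval x)⁻¹ := by
  induction n using Nat.strong_induction_on with
  | _ n ih =>
  have hne : ∀ᶠ x in atTop, p.eval x ≠ 0 := eventually_atTop_not_isRoot p hp
  have hterm (i : ℕ) (hi : i ∈ Finset.range n) :
      (fun x ↦ iteratedDeriv (i + 1) p.eval x * iteratedDeriv (n - (i + 1)) f x)
        =O[atTop] (1 : ℝ → ℝ) := by
    have hlt : n - (i + 1) < n := by grind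
    have hf_lower := ih _ hlt (hf.of_le (by exact_mod_cast hlt.le)) fun k hk ↦ hs k (by lia)
    refine ((isBigO_iteratedDeriv_eval p (i + 1)).mul hf_lower).congr' .rfl ?_
    filter_upwards [hne] with x hx using mul_inv_cancel₀ hx
  have hbdd : (fun x ↦ p.eval x * iteratedDeriv n f x) =O[atTop] (1 : ℝ → ℝ) := by
    simp only [eval_mul_iteratedDeriv_eq hf hfs]
    exact (hs n le_rfl).sub (IsBigO.fun_sum fun i hi ↦ (hterm i hi).const_mul_left _)
  refine ((isBigO_refl (fun x ↦ (p.eval x)⁻¹) atTop).mul hbdd).congr' ?_ ?_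
  · filter_upwards [hne] with x hx using inv_mul_cancel_left₀ hx _
  · simp

theorem isBigO_inv_eval_rpow_neg_two (hp : 2 ≤ p.degree) :
    (fun x ↦ (p.eval x)⁻¹) =O[atTop] fun x : ℝ ↦ x ^ (-2 : ℝ) := by
  have hdegree : (X ^ 2 : ℝ[X]).degree ≤ p.degree := by
    rwa [degree_X_pow]
  have hpow : (fun x : ℝ ↦ x ^ 2) =O[atTop] p.eval := by
    simpa using isBigO_atTop_of_degree_le _ _ hdegree
  refine (hpow.inv_rev ?_).congr' .rfl ?_
  · filter_upwards [eventually_ne_atTop 0] with x hx hx'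
    exact absurd hx' (by positivity)
  · filter_upwards [eventually_ge_atTop 0] with x hx
    rw [Real.rpow_neg hx, Real.rpow_two]

theorem integrable_iteratedDeriv_of_eval_mul_eq (hp : 2 ≤ p.degree) {n : ℕ}
    (hf : ContDiff ℝ n f) (heven : Function.Even f)
    (hs : ∀ k ≤ n, iteratedDeriv k s =O[atTop] (1 : ℝ → ℝ)) (hfs : ∀ x, p.eval x * f x = s x) :
    Integrable (iteratedDeriv n f) := by
  have hp0 : p ≠ 0 := ne_zero_of_coe_le_degree hp
  have hcont : Continuous (iteratedDeriv n f) := hf.continuous_iteratedDeriv n le_rfl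
  refine hcont.locallyIntegrable.integrable_of_isBigO_atTop_of_norm_isNegInvariant ?_
    ((isBigO_iteratedDeriv_inv_eval_of_eval_mul_eq hp0 hf hs hfs).trans
      (isBigO_inv_eval_rpow_neg_two hp))
    (integrableAtFilter_rpow_atTop_iff.2 (by norm_num))
  exact .of_forall fun x ↦ by simp [iteratedDeriv_neg_of_even heven]

end PolynomialMul

theorem isBigO_one_iteratedDeriv_sin_const_mul (a : ℝ) (n : ℕ) :
    iteratedDeriv n (fun x ↦ Real.sin (a * x)) =O[atTop] (1 : ℝ → ℝ) := by
  rw [iteratedDeriv_comp_const_mul Real.contDiff_sin]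
  refine .const_mul_left (.of_bound 1 (.of_forall fun x ↦ ?_)) _
  simpa using Real.abs_iteratedDeriv_sin_le_one n (a * x)

theorem isBigO_one_iteratedDeriv_sin_add_sin (a b : ℝ) (n : ℕ) :
    iteratedDeriv n (fun x ↦ Real.sin (a * x) + Real.sin (b * x)) =O[atTop] (1 : ℝ → ℝ) := by
  have hsum : iteratedDeriv n (fun x ↦ Real.sin (a * x) + Real.sin (b * x)) = fun x ↦
      iteratedDeriv n (fun x ↦ Real.sin (a * x)) x + iteratedDeriv n (fun x ↦ Real.sin (b * x)) x :=
    funext fun x ↦ iteratedDeriv_fun_add (by fun_prop) (by fun_prop)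
  rw [hsum]
  exact (isBigO_one_iteratedDeriv_sin_const_mul a n).add
    (isBigO_one_iteratedDeriv_sin_const_mul b n)

/-- The denominator `2πx(1 - 4η²x²)` of the kernel `K_η`, as a polynomial in `x`. -/
noncomputable def kernelDenom (η : ℝ) : ℝ[X] :=
  C (2 * π) * X * (1 - C (4 * η ^ 2) * X ^ 2)

theorem eval_kernelDenom (η x : ℝ) :
    (kernelDenom η).eval x = 2 * π * x * (1 - 4 * η ^ 2 * x ^ 2) := by
  simp [kernelDenom]

theorem degree_kernelDenom {η : ℝ} (hη : η ≠ 0) : (kernelDenom η).degree = 3 := by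
  unfold kernelDenom
  compute_degree!

theorem ne_of_eval_kernelDenom_ne_zero {η x : ℝ} (hη : η ≠ 0) (hx : (kernelDenom η).eval x ≠ 0) :
    x ≠ 0 ∧ x ≠ 1 / (2 * η) ∧ x ≠ -(1 / (2 * η)) := by
  rw [eval_kernelDenom] at hx
  refine ⟨?_, ?_, ?_⟩ <;> rintro rfl <;> refine hx ?_
  · ring
  all_goals
    field_simp
    ring

theorem fourier_transform_K_eta_eq_integral_second_deriv_general
    (η : ℝ) (hη : η ≠ 0) (K : ℝ → ℝ) (hK : Continuous K)
    (hKeq : ∀ x : ℝ, x ≠ 0 → x ≠ 1 / (2 * η) → x ≠ -(1 / (2 * η)) →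
      K x = (Real.sin (2 * π * x) + Real.sin (2 * π * (1 + η) * x)) /
        (2 * π * x * (1 - 4 * η ^ 2 * x ^ 2)))
    (t : ℝ) (ht : t ≠ 0) :
    (∫ x : ℝ, (K x : ℂ) * Complex.exp (-(2 * (π : ℂ)) * Complex.I * (t : ℂ) * (x : ℂ)))
      = (((∫ x in Set.Ioi (0:ℝ),
            deriv (deriv K) x * (Real.sin (π * t * x) / (π * t)) ^ 2) : ℝ) : ℂ) := by
  set s : ℝ → ℝ := fun x ↦ Real.sin (2 * π * x) + Real.sin (2 * π * (1 + η) * x) with hs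
  have hdegree : 2 ≤ (kernelDenom η).degree := by rw [degree_kernelDenom hη]; norm_num
  have hdenom : kernelDenom η ≠ 0 := ne_zero_of_coe_le_degree hdegree
  have hmul : ∀ x, (kernelDenom η).eval x * K x = s x :=
    eval_mul_eq_of_eq_div_eval hdenom (by fun_prop) hK fun x hx ↦ by
      obtain ⟨hzero, hpos, hneg⟩ := ne_of_eval_kernelDenom_ne_zero hη hx
      rw [hKeq x hzero hpos hneg, eval_kernelDenom]
  have hanalytic (x : ℝ) : AnalyticAt ℝ K x :=
    analyticAt_of_eval_mul_eq hdenom (by fun_prop) hK.continuousAt hmul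
  have hsmooth (n : ℕ) : ContDiff ℝ n K :=
    contDiff_iff_contDiffAt.2 fun x ↦ (hanalytic x).contDiffAt
  have heven : Function.Even K :=
    even_of_eval_mul_eq hdenom hK (fun x ↦ by simp only [eval_kernelDenom]; ring)
      (fun x ↦ by simp only [hs, mul_neg, Real.sin_neg]; ring) hmul
  have hint (n : ℕ) (_ : n ≤ 2) : Integrable (iteratedDeriv n K) :=
    integrable_iteratedDeriv_of_eval_mul_eq hdegree (hsmooth n) heven
      (fun k _ ↦ isBigO_one_iteratedDeriv_sin_add_sin _ _ k) hmul
  rw [← fourier_ofReal_eq_integral_mul_exp]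
  exact fourier_ofReal_eq_integral_Ioi_deriv_deriv_mul_sin_sq (hsmooth 2) hint heven ht

/-- **The Fourier transform of `K_η` as an integral of its second derivative.** For the
continuous extension `K` of `x ↦ (sin(2πx) + sin(2π(1+η)x)) / (2πx(1 - 4η²x²))` and `t ≠ 0`,
`K̂(t) = ∫_0^∞ K″(x) (sin(πtx)/(πt))² dx`. -/
theorem fourier_transform_K_eta_eq_integral_second_deriv
    (η : ℝ) (hη : 0 < η) (K : ℝ → ℝ) (hK : Continuous K)
    (hKeq : ∀ x : ℝ, x ≠ 0 → x ≠ 1 / (2 * η) → x ≠ -(1 / (2 * η)) →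
      K x = (Real.sin (2 * π * x) + Real.sin (2 * π * (1 + η) * x)) /
        (2 * π * x * (1 - 4 * η ^ 2 * x ^ 2)))
    (t : ℝ) (ht : t ≠ 0) :
    (∫ x : ℝ, (K x : ℂ) * Complex.exp (-(2 * (π : ℂ)) * Complex.I * (t : ℂ) * (x : ℂ)))
      = (((∫ x in Set.Ioi (0:ℝ),
            deriv (deriv K) x * (Real.sin (π * t * x) / (π * t)) ^ 2) : ℝ) : ℂ) := by
  exact fourier_transform_K_eta_eq_integral_second_deriv_general η hη.ne' K hK hKeq t ht
end

section
/- Let a_p ≥ 0 be a nonnegative real number attached to each prime p, and suppose there is a constant C such that |Σ_{p ≤ x} a_p/p − log log x| ≤ C for all x ≥ 3. Then there is a constant C′, depending only on C, such that for all σ with 0 < σ ≤ 1/2, the series Σ_p a_p/p^{1+σ} converges and |Σ_p a_p/p^{1+σ} + log σ| ≤ C′. -/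
open Real

/-!
Write `A u = ∑_{log p ≤ u} a_p / p`, so that `A u = log u + O(1)`. Since
`exp (-t) = ∫_t^∞ exp (-v) dv`, exchanging sum and integral gives
`∑_p a_p / p ^ (1 + σ) = ∑_p (a_p / p) exp (-σ log p) = ∫_0^∞ exp (-v) A (v / σ) dv`.
Here `A (v / σ) = -log σ + log v + O(1)` as long as `v / σ` is not small. For small `v / σ` the
monotone function `A` is bounded, and `0 ≤ -log σ ≤ |log v| + O(1)`. So
`|A (v / σ) + log σ| ≤ |log v| + O(1)` throughout, and `exp (-v) |log v|` is integrable.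
-/

open Set MeasureTheory

theorem abs_log_le_rpow_add_rpow_neg_div {x ε : ℝ} (hx : 0 < x) (hε : 0 < ε) :
    |log x| ≤ (x ^ ε + x ^ (-ε)) / ε := by
  have log_le : log x ≤ x ^ ε / ε := log_le_rpow_div hx.le hε
  have neg_log_le : -log x ≤ x ^ (-ε) / ε := by
    simpa only [log_inv, inv_rpow hx.le, rpow_neg hx.le]
      using log_le_rpow_div (inv_nonneg.2 hx.le) hε
  have : 0 ≤ x ^ ε / ε := by positivity
  have : 0 ≤ x ^ (-ε) / ε := by positivity
  rw [add_div]
  exact abs_le.2 ⟨by linarith, by linarith⟩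

theorem integrableOn_exp_neg_mul_abs_log :
    IntegrableOn (fun v : ℝ ↦ exp (-v) * |log v|) (Ioi 0) := by
  have dominant : IntegrableOn (fun v : ℝ ↦ (exp (-v) * v ^ (3 / 2 - 1 : ℝ) +
      exp (-v) * v ^ (1 / 2 - 1 : ℝ)) * 2) (Ioi 0) :=
    ((GammaIntegral_convergent (by norm_num)).add
      (GammaIntegral_convergent (by norm_num))).mul_const 2
  refine dominant.mono' (by fun_prop) ((ae_restrict_mem measurableSet_Ioi).mono fun v hv ↦ ?_)
  rw [norm_of_nonneg (by positivity)]
  calc exp (-v) * |log v|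
      ≤ exp (-v) * ((v ^ (1 / 2 : ℝ) + v ^ (-(1 / 2) : ℝ)) / (1 / 2)) := by
        gcongr
        exact abs_log_le_rpow_add_rpow_neg_div hv (by norm_num)
    _ = (exp (-v) * v ^ (3 / 2 - 1 : ℝ) + exp (-v) * v ^ (1 / 2 - 1 : ℝ)) * 2 := by
        norm_num
        ring

theorem integrableOn_exp_neg_Ioi_zero : IntegrableOn (fun v : ℝ ↦ exp (-v)) (Ioi 0) := by
  simpa only [neg_mul, one_mul] using exp_neg_integrableOn_Ioi 0 one_pos

theorem integrableOn_exp_neg_mul_const_add_abs_log (c : ℝ) :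
    IntegrableOn (fun v : ℝ ↦ exp (-v) * (c + |log v|)) (Ioi 0) := by
  simp only [mul_add]
  exact (integrableOn_exp_neg_Ioi_zero.mul_const c).add integrableOn_exp_neg_mul_abs_log

section LogGrowth

variable {A : ℝ → ℝ} {C u₀ σ : ℝ}

theorem abs_comp_div_add_log_le (hmono : Monotone A) (hnonneg : ∀ u, 0 ≤ A u)
    (hA : ∀ u, u₀ ≤ u → |A u - log u| ≤ C) (hσ : 0 < σ) (hσ_le : σ ≤ 1) {v : ℝ} (hv : 0 < v) :
    |A (v / σ) + log σ| ≤ C + |log u₀| + |log v| := by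
  have log_div_eq : log (v / σ) = log v - log σ := log_div hv.ne' hσ.ne'
  rcases le_or_gt u₀ (v / σ) with large | small
  · calc |A (v / σ) + log σ| = |(A (v / σ) - log (v / σ)) + log v| := by rw [log_div_eq]; ring_nf
      _ ≤ |A (v / σ) - log (v / σ)| + |log v| := abs_add_le _ _
      _ ≤ C + |log u₀| + |log v| := by linarith [hA _ large, abs_nonneg (log u₀)]
  · have A_le : A (v / σ) ≤ C + |log u₀| := by
      linarith [hmono small.le, le_of_abs_le (hA u₀ le_rfl), le_abs_self (log u₀)]
    have neg_log_le : -log σ ≤ |log u₀| + |log v| := by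
      linarith [log_le_log (by positivity) small.le, le_abs_self (log u₀), neg_abs_le (log v)]
    have log_nonpos : log σ ≤ 0 := Real.log_nonpos hσ.le hσ_le
    have C_nonneg : 0 ≤ C := (abs_nonneg _).trans (hA u₀ le_rfl)
    exact abs_le.2 ⟨by linarith [hnonneg (v / σ)], by linarith [abs_nonneg (log v)]⟩

theorem integrableOn_exp_neg_mul_comp_div (hmono : Monotone A) (hnonneg : ∀ u, 0 ≤ A u)
    (hA : ∀ u, u₀ ≤ u → |A u - log u| ≤ C) (hσ : 0 < σ) (hσ_le : σ ≤ 1) :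
    IntegrableOn (fun v ↦ exp (-v) * A (v / σ)) (Ioi 0) := by
  have measurable_A : Measurable A := hmono.measurable
  refine (integrableOn_exp_neg_mul_const_add_abs_log (C + |log u₀| - log σ)).mono'
    (by fun_prop) ((ae_restrict_mem measurableSet_Ioi).mono fun v hv ↦ ?_)
  rw [norm_of_nonneg (mul_nonneg (exp_pos _).le (hnonneg _))]
  gcongr
  linarith [le_of_abs_le (abs_comp_div_add_log_le hmono hnonneg hA hσ hσ_le hv)]

theorem abs_integral_exp_neg_mul_comp_div_add_log_le (hmono : Monotone A)
    (hnonneg : ∀ u, 0 ≤ A u) (hA : ∀ u, u₀ ≤ u → |A u - log u| ≤ C)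
    (hσ : 0 < σ) (hσ_le : σ ≤ 1) :
    |(∫ v in Ioi 0, exp (-v) * A (v / σ)) + log σ| ≤
      C + |log u₀| + ∫ v in Ioi 0, exp (-v) * |log v| := by
  have integral_exp_mul_const (c : ℝ) : ∫ v in Ioi 0, exp (-v) * c = c := by
    rw [integral_mul_const, integral_exp_neg_Ioi_zero, one_mul]
  calc |(∫ v in Ioi 0, exp (-v) * A (v / σ)) + log σ|
      = ‖∫ v in Ioi 0, exp (-v) * (A (v / σ) + log σ)‖ := by
        simp only [mul_add]
        rw [integral_add (integrableOn_exp_neg_mul_comp_div hmono hnonneg hA hσ hσ_le)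
          (integrableOn_exp_neg_Ioi_zero.mul_const _), integral_exp_mul_const, norm_eq_abs]
    _ ≤ ∫ v in Ioi 0, exp (-v) * (C + |log u₀| + |log v|) := by
        refine norm_integral_le_of_norm_le (integrableOn_exp_neg_mul_const_add_abs_log _)
          ((ae_restrict_mem measurableSet_Ioi).mono fun v hv ↦ ?_)
        rw [norm_mul, norm_eq_abs, norm_eq_abs, abs_exp]
        gcongr
        exact abs_comp_div_add_log_le hmono hnonneg hA hσ hσ_le hv
    _ = C + |log u₀| + ∫ v in Ioi 0, exp (-v) * |log v| := by
        simp only [mul_add _ (C + |log u₀|)]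
        rw [integral_add (integrableOn_exp_neg_Ioi_zero.mul_const _)
          integrableOn_exp_neg_mul_abs_log, integral_exp_mul_const]

end LogGrowth

section SummatoryFunction

variable {ι : Type*} {b ℓ : ι → ℝ} {A : ℝ → ℝ} {σ : ℝ}

theorem monotone_of_hasSum_indicator_le (hb : ∀ i, 0 ≤ b i)
    (hA : ∀ u, HasSum ({i | ℓ i ≤ u}.indicator b) (A u)) : Monotone A := fun u w huw ↦
  hasSum_le (indicator_le_indicator_of_subset (fun _ hi ↦ le_trans hi huw) hb) (hA u) (hA w)

theorem setIntegral_Ioi_zero_indicator_Ici_exp_neg {t : ℝ} (ht : 0 ≤ t) :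
    ∫ v in Ioi 0, (Ici t).indicator (fun v ↦ exp (-v)) v = exp (-t) := by
  rw [← integral_Ici_eq_integral_Ioi, setIntegral_indicator measurableSet_Ici,
    inter_eq_right.2 (Ici_subset_Ici.2 ht), integral_Ici_eq_integral_Ioi, integral_exp_neg_Ioi]

theorem hasSum_mul_exp_neg_mul [Countable ι] (hb : ∀ i, 0 ≤ b i) (hℓ : ∀ i, 0 ≤ ℓ i)
    (hA : ∀ u, HasSum ({i | ℓ i ≤ u}.indicator b) (A u)) (hσ : 0 < σ)
    (hint : IntegrableOn (fun v ↦ exp (-v) * A (v / σ)) (Ioi 0)) :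
    HasSum (fun i ↦ b i * exp (-(σ * ℓ i))) (∫ v in Ioi 0, exp (-v) * A (v / σ)) := by
  let F (i : ι) (v : ℝ) : ℝ := b i * (Ici (σ * ℓ i)).indicator (fun v ↦ exp (-v)) v
  have F_nonneg (i : ι) (v : ℝ) : 0 ≤ F i v :=
    mul_nonneg (hb i) (indicator_nonneg (fun _ _ ↦ (exp_pos _).le) v)
  have F_eq (i : ι) (v : ℝ) : F i v = exp (-v) * {i | ℓ i ≤ v / σ}.indicator b i := by
    simp only [F, indicator_apply, mem_Ici, mem_ofPred_eq, le_div_iff₀' hσ, mul_ite, mul_zero,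
      mul_comm (b i)]
  have hasSum_F (v : ℝ) : HasSum (F · v) (exp (-v) * A (v / σ)) := by
    simpa only [F_eq] using (hA (v / σ)).mul_left (exp (-v))
  have integral_F (i : ι) : ∫ v in Ioi 0, F i v = b i * exp (-(σ * ℓ i)) := by
    rw [integral_const_mul,
      setIntegral_Ioi_zero_indicator_Ici_exp_neg (mul_nonneg hσ.le (hℓ i))]
  have measurable_F (i : ι) : Measurable (F i) :=
    ((measurable_exp.comp measurable_neg).indicator measurableSet_Ici).const_mul _
  simp only [← integral_F]
  refine hasSum_integral_of_dominated_convergence F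
    (fun i ↦ (measurable_F i).aestronglyMeasurable)
    (fun i ↦ .of_forall fun v ↦ (norm_of_nonneg (F_nonneg i v)).le)
    (.of_forall fun v ↦ (hasSum_F v).summable) ?_ (.of_forall hasSum_F)
  simp only [(hasSum_F _).tsum_eq]
  exact hint

theorem summable_and_abs_tsum_mul_exp_neg_mul_add_log_le [Countable ι] {C u₀ : ℝ}
    (hb : ∀ i, 0 ≤ b i) (hℓ : ∀ i, 0 ≤ ℓ i)
    (hA : ∀ u, HasSum ({i | ℓ i ≤ u}.indicator b) (A u))
    (hlog : ∀ u, u₀ ≤ u → |A u - log u| ≤ C) (hσ : 0 < σ) (hσ_le : σ ≤ 1) :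
    Summable (fun i ↦ b i * exp (-(σ * ℓ i))) ∧
      |(∑' i, b i * exp (-(σ * ℓ i))) + log σ| ≤
        C + |log u₀| + ∫ v in Ioi 0, exp (-v) * |log v| := by
  have hmono : Monotone A := monotone_of_hasSum_indicator_le hb hA
  have hnonneg (u : ℝ) : 0 ≤ A u := (hA u).nonneg (indicator_nonneg fun i _ ↦ hb i)
  have laplace := hasSum_mul_exp_neg_mul hb hℓ hA hσ
    (integrableOn_exp_neg_mul_comp_div hmono hnonneg hlog hσ hσ_le)
  refine ⟨laplace.summable, ?_⟩
  rw [laplace.tsum_eq]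
  exact abs_integral_exp_neg_mul_comp_div_add_log_le hmono hnonneg hlog hσ hσ_le

end SummatoryFunction

theorem div_rpow_one_add_eq_mul_exp {x : ℝ} (hx : 0 < x) (c σ : ℝ) :
    c / x ^ (1 + σ) = c / x * exp (-(σ * log x)) := by
  rw [rpow_add hx, rpow_one, rpow_def_of_pos hx, exp_neg, mul_comm σ, ← div_div, div_eq_mul_inv]

theorem hasSum_subtype_indicator_natCast_le {M : Type*} [AddCommMonoid M] [TopologicalSpace M]
    {P : ℕ → Prop} [DecidablePred P] (hP : ¬P 0) (f : ℕ → M) (x : ℝ) :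
    HasSum ({n : {n // P n} | ((n : ℕ) : ℝ) ≤ x}.indicator fun n ↦ f n)
      (∑ n ∈ Finset.filter P (Finset.Iic ⌊x⌋₊), f n) := by
  let s : Finset {n // P n} := (Finset.filter P (Finset.Iic ⌊x⌋₊)).subtype P
  have setOf_eq : {n : {n // P n} | ((n : ℕ) : ℝ) ≤ x} = s := by
    ext n
    have n_ne_zero : (n : ℕ) ≠ 0 := fun h ↦ hP (h ▸ n.2)
    simp only [s, mem_ofPred_eq, Finset.mem_coe, Finset.mem_subtype, Finset.mem_filter,
      Finset.mem_Iic, Nat.le_floor_iff' n_ne_zero, n.2, and_true]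
  rw [setOf_eq, ← Finset.sum_subtype_of_mem f fun n hn ↦ (Finset.mem_filter.1 hn).2]
  exact hasSum_subtype_iff_indicator.1 (s.hasSum fun n ↦ f n)

theorem mertens_to_log_pole_general {ι : Type*} [Countable ι] {a N : ι → ℝ} {S : ℝ → ℝ}
    {C x₀ σ : ℝ} (ha : ∀ i, 0 ≤ a i) (hN : ∀ i, 1 ≤ N i)
    (hS : ∀ x, HasSum ({i | N i ≤ x}.indicator fun i ↦ a i / N i) (S x)) (hx₀ : 1 < x₀)
    (hlog : ∀ x, x₀ ≤ x → |S x - log (log x)| ≤ C) (hσ : 0 < σ) (hσ_le : σ ≤ 1) :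
    Summable (fun i ↦ a i / N i ^ (1 + σ)) ∧
      |(∑' i, a i / N i ^ (1 + σ)) + log σ| ≤
        C + |log (log x₀)| + ∫ v in Ioi 0, exp (-v) * |log v| := by
  have N_pos (i : ι) : 0 < N i := one_pos.trans_le (hN i)
  simp only [div_rpow_one_add_eq_mul_exp (N_pos _)]
  refine summable_and_abs_tsum_mul_exp_neg_mul_add_log_le (A := fun u ↦ S (exp u))
    (fun i ↦ div_nonneg (ha i) (N_pos i).le) (fun i ↦ log_nonneg (hN i)) (fun u ↦ ?_)
    (fun u hu ↦ ?_) hσ hσ_le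
  · simpa only [log_le_iff_le_exp (N_pos _)] using hS (exp u)
  · simpa only [log_exp] using hlog (exp u) ((log_le_iff_le_exp (one_pos.trans hx₀)).1 hu)

/-- **From a Mertens-type estimate to a logarithmic pole.** If
`∑_{p ≤ x} a_p/p = log log x + O(1)`, then uniformly for `0 < σ ≤ 1/2`,
`∑_p a_p/p^{1+σ} = -log σ + O(1)`. -/
theorem mertens_to_log_pole (C : ℝ) :
    ∃ C' : ℝ, ∀ a : ℕ → ℝ, (∀ p : ℕ, p.Prime → 0 ≤ a p) →
      (∀ x : ℝ, 3 ≤ x →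
        |(∑ p ∈ Finset.filter Nat.Prime (Finset.Iic ⌊x⌋₊), a p / (p : ℝ)) -
            Real.log (Real.log x)| ≤ C) →
      ∀ σ : ℝ, 0 < σ → σ ≤ 1 / 2 →
        Summable (fun p : Nat.Primes => a p / ((p : ℕ) : ℝ) ^ (1 + σ)) ∧
        |(∑' p : Nat.Primes, a p / ((p : ℕ) : ℝ) ^ (1 + σ)) + Real.log σ| ≤ C' :=
  ⟨_, fun a ha h _ hσ hσ_le ↦ mertens_to_log_pole_general (fun p : Nat.Primes ↦ ha p p.2)
    (fun p ↦ Nat.one_le_cast.2 p.2.one_le)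
    (hasSum_subtype_indicator_natCast_le Nat.not_prime_zero fun p ↦ a p / p)
    (by norm_num) h hσ (hσ_le.trans (by norm_num))⟩
end
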